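/- Strong-constraint quadratic inequality for the control error (inequality (eq:shorterineq)). Suppose e_y^0,…,e_y^K ∈ Y, e_p^1,…,e_p^{K+1} ∈ Y and e_u ∈ U, together with linear functionals r_y^1,…,r_y^K and r_p^1,…,r_p^K on Y and r_u on U, satisfy: (i) m(e_y^k − e_y^{k−1}, φ) + τ a(e_y^k, φ) = τ r_y^k(φ) for all φ ∈ Y and k = 1,…,K; (ii) m(φ, e_p^k − e_p^{k+1}) + τ a(φ, e_p^k) = τ r_p^k(φ) − τ (C e_y^k, C φ)_D for all φ ∈ Y and k = 1,…,K; (iii) (e_u, ψ)_U − m(ψ, e_p^1) = r_u(ψ) for all ψ ∈ U; with e_p^{K+1} = 0 and e_y^0 = e_u. Set R_y = (τ Σ_{k=1}^K ‖r_y^k‖_{Y'}²)^{1/2} and R_p = (τ Σ_{k=1}^K ‖r_p^k‖_{Y'}²)^{1/2}. Then ‖e_u‖_U² ≤ ‖r_u‖_{U'} ‖e_u‖_U + α_LB^{−1/2} R_p ‖e_u‖_U + ((√2 + 1)/α_LB) R_y R_p + (γ_c²/(2 α_LB²)) R_y². -/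

import Mathlib

set_option autoImplicit false

open Finset RealInnerProductSpace

/-- Dual norm of a functional `r` over the nonzero elements of `S`,
with respect to the norm function `nrm`. -/
noncomputable def dualNorm {Y : Type*} [Zero Y] (nrm : Y → ℝ) (S : Set Y) (r : Y → ℝ) : ℝ :=
  sSup {x : ℝ | ∃ v ∈ S, v ≠ 0 ∧ x = r v / nrm v}


theorem le_of_sq_le_sq_aux {x y : ℝ} (h : x ^ 2 ≤ y ^ 2) (hy : 0 ≤ y) : x ≤ y :=
  (le_abs_self x).trans (abs_le_of_sq_le_sq h hy)

theorem aux_tele (f : ℕ → ℝ) (K : ℕ) : ∑ k ∈ Icc 1 K, (f (k + 1) - f k) = f (K + 1) - f 1 := by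
  induction K with
  | zero => simp
  | succ n ih =>
    rw [Finset.sum_Icc_succ_top (by omega), ih]; ring

theorem aux_cs (τ : ℝ) (hτ : 0 < τ) (s : Finset ℕ) (f g : ℕ → ℝ) :
    τ * ∑ k ∈ s, f k * g k
      ≤ Real.sqrt (τ * ∑ k ∈ s, f k ^ 2) * Real.sqrt (τ * ∑ k ∈ s, g k ^ 2) := by
  have hf : 0 ≤ ∑ k ∈ s, f k ^ 2 := Finset.sum_nonneg fun i _ => sq_nonneg _
  rw [← Real.sqrt_mul (by positivity)]
  apply Real.le_sqrt_of_sq_le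
  have h := Finset.sum_mul_sq_le_sq_mul_sq s f g
  calc (τ * ∑ k ∈ s, f k * g k) ^ 2 = τ ^ 2 * (∑ k ∈ s, f k * g k) ^ 2 := by ring
    _ ≤ τ ^ 2 * ((∑ k ∈ s, f k ^ 2) * ∑ k ∈ s, g k ^ 2) := by gcongr
    _ = _ := by ring

theorem aux_dual {Y H : Type*} [NormedAddCommGroup Y] [InnerProductSpace ℝ Y]
    [FiniteDimensional ℝ Y] [NormedAddCommGroup H] [InnerProductSpace ℝ H]
    (j : Y →ₗ[ℝ] H) (hj : Function.Injective j) (S : Set Y) (r : Y →ₗ[ℝ] ℝ) (v : Y)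
    (hv : v ∈ S) : r v ≤ dualNorm (fun v : Y => ‖j v‖) S ⇑r * ‖j v‖ := by
  by_cases h0 : v = 0
  · simp [h0]
  have hpos : ∀ w : Y, w ≠ 0 → 0 < ‖j w‖ := fun w hw => by
    rw [norm_pos_iff]; intro h; exact hw (hj (by simpa using h))
  rw [← div_le_iff₀ (hpos v h0)]
  refine le_csSup ?_ ⟨v, hv, h0, rfl⟩
  obtain ⟨c, hc, hc'⟩ := j.exists_antilipschitzWith (LinearMap.ker_eq_bot.2 hj)
  refine ⟨‖LinearMap.toContinuousLinearMap r‖ * c, ?_⟩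
  rintro x ⟨w, _, hw, rfl⟩
  show r w / ‖j w‖ ≤ _
  rw [div_le_iff₀ (hpos w hw), mul_assoc]
  have h1 : r w ≤ ‖LinearMap.toContinuousLinearMap r‖ * ‖w‖ :=
    (le_abs_self _).trans ((LinearMap.toContinuousLinearMap r).le_opNorm w)
  have h2 : ‖w‖ ≤ c * ‖j w‖ := by
    have := hc'.le_mul_dist w 0
    simpa using this
  exact h1.trans (by gcongr)

theorem aux_dual' {Y : Type*} [NormedAddCommGroup Y] [InnerProductSpace ℝ Y]
    [FiniteDimensional ℝ Y] (r : Y →ₗ[ℝ] ℝ) (v : Y) :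
    r v ≤ dualNorm (fun v : Y => ‖v‖) Set.univ ⇑r * ‖v‖ :=
  aux_dual (LinearMap.id : Y →ₗ[ℝ] Y) (fun _ _ h => h) Set.univ r v trivial

theorem aux_inner {H : Type*} [NormedAddCommGroup H] [InnerProductSpace ℝ H] (x y : H) :
    (‖x‖ ^ 2 - ‖y‖ ^ 2) / 2 ≤ ⟪x, x - y⟫ := by
  have h := norm_sub_sq_real x y
  have h2 := sq_nonneg ‖x - y‖
  rw [inner_sub_right, real_inner_self_eq_norm_sq]
  linarith

/-- The final scalar argument. -/
theorem aux_real (E α γ g Ny Np Cy Ry Rp d m : ℝ) (hα : 0 < α) (hE : 0 ≤ E)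
    (hg : g ^ 2 = γ ^ 2) (hg0 : 0 ≤ g)
    (hNp : 0 ≤ Np) (hCy : 0 ≤ Cy) (hRy : 0 ≤ Ry) (hRp : 0 ≤ Rp)
    (h1 : α * Ny ^ 2 ≤ E ^ 2 / 2 + Ry * Ny)
    (h2 : α * Np ^ 2 ≤ Rp * Np + g * Cy * Np)
    (h3 : m ≤ Rp * Ny + Ry * Np - Cy ^ 2) (h4 : E ^ 2 ≤ d * E + m) :
    E ^ 2 ≤ d * E + (1 / Real.sqrt α) * Rp * E + ((Real.sqrt 2 + 1) / α) * Ry * Rp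
      + γ ^ 2 / (2 * α ^ 2) * Ry ^ 2 := by
  have hs : 0 < Real.sqrt α := Real.sqrt_pos.2 hα
  have hss : Real.sqrt α ^ 2 = α := Real.sq_sqrt hα.le
  have hy : Ny ≤ 1 / Real.sqrt α * E + Ry / α := by
    apply le_of_sq_le_sq_aux ?_ (by positivity)
    have e : (1 / Real.sqrt α * E + Ry / α) ^ 2
        = E ^ 2 / α + Ry ^ 2 / α ^ 2 + 2 * (1 / Real.sqrt α * E * (Ry / α)) := by
      rw [add_sq, mul_pow, div_pow, div_pow, hss]; ring
    have p : 0 ≤ 2 * (1 / Real.sqrt α * E * (Ry / α)) := by positivity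
    have q : Ny ^ 2 ≤ E ^ 2 / α + Ry ^ 2 / α ^ 2 := by
      have : E ^ 2 / α + Ry ^ 2 / α ^ 2 = (α * E ^ 2 + Ry ^ 2) / α ^ 2 := by field_simp
      rw [this, le_div_iff₀ (by positivity)]
      nlinarith [sq_nonneg (α * Ny - Ry), mul_le_mul_of_nonneg_left h1 hα.le]
    linarith
  have hp : Np ≤ (Rp + g * Cy) / α := by
    rw [le_div_iff₀ hα]
    rcases hNp.eq_or_lt with h | h
    · rw [← h]; have := mul_nonneg hg0 hCy; linarith
    · nlinarith
  have a1 : Rp * Ny ≤ Rp * (1 / Real.sqrt α * E + Ry / α) := by gcongr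
  have a2 : Ry * Np ≤ Ry * ((Rp + g * Cy) / α) := by gcongr
  have a3 : (1 : ℝ) ≤ Real.sqrt 2 := Real.one_le_sqrt.2 (by norm_num)
  have a4 : 0 ≤ (Real.sqrt 2 - 1) * (Ry * Rp / α) :=
    mul_nonneg (by linarith) (by positivity)
  have a5 : 0 ≤ (g * Ry / (2 * α) - Cy) ^ 2 := sq_nonneg _
  have a6 : (g * Ry / (2 * α) - Cy) ^ 2 =
      γ ^ 2 / (2 * α ^ 2) * Ry ^ 2 / 2 - Ry * (g * Cy / α) + Cy ^ 2 := by
    rw [← hg]; field_simp; ring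
  have a7 : 0 ≤ γ ^ 2 / (2 * α ^ 2) * Ry ^ 2 / 2 := by positivity
  have a8 : Ry * ((Rp + g * Cy) / α) = Ry * Rp / α + Ry * (g * Cy / α) := by ring
  have a9 : ((Real.sqrt 2 + 1) / α) * Ry * Rp
      = (Real.sqrt 2 - 1) * (Ry * Rp / α) + 2 * (Ry * Rp / α) := by ring
  have a10 : Rp * (1 / Real.sqrt α * E + Ry / α) = 1 / Real.sqrt α * Rp * E + Ry * Rp / α := by
    ring
  linarith

/-- Strong-constraint quadratic inequality for the control error. -/
theorem strong_constraint_quadratic_inequality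
    {H Y D : Type*} [NormedAddCommGroup H] [InnerProductSpace ℝ H]
    [NormedAddCommGroup Y] [InnerProductSpace ℝ Y] [FiniteDimensional ℝ Y]
    [NormedAddCommGroup D] [InnerProductSpace ℝ D]
    (ι : Y →ₗ[ℝ] H) (hι : Function.Injective ι)
    (U : Submodule ℝ Y)
    (a : Y →ₗ[ℝ] (Y →ₗ[ℝ] ℝ))
    (τ : ℝ) (hτ : 0 < τ) (K : ℕ) (hK : 1 ≤ K)
    (αLB : ℝ) (hαLB : 0 < αLB) (hcoer : ∀ v : Y, αLB * ‖v‖ ^ 2 ≤ a v v)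
    (C : Y →ₗ[ℝ] D) (γc : ℝ) (hγc : ∀ v : Y, ‖C v‖ ≤ γc * ‖v‖)
    (ey ep : ℕ → Y) (eu : Y) (heu : eu ∈ U)
    (ry rp : ℕ → (Y →ₗ[ℝ] ℝ)) (ru : Y →ₗ[ℝ] ℝ)
    (hstate : ∀ k, 1 ≤ k → k ≤ K → ∀ φ : Y,
      ⟪ι (ey k - ey (k - 1)), ι φ⟫ + τ * a (ey k) φ = τ * ry k φ)
    (hadj : ∀ k, 1 ≤ k → k ≤ K → ∀ φ : Y,
      ⟪ι φ, ι (ep k - ep (k + 1))⟫ + τ * a φ (ep k)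
        = τ * rp k φ - τ * ⟪C (ey k), C φ⟫)
    (hopt : ∀ ψ ∈ U, ⟪ι eu, ι ψ⟫ - ⟪ι ψ, ι (ep 1)⟫ = ru ψ)
    (hfin : ep (K + 1) = 0) (hinit : ey 0 = eu)
    (Ry Rp : ℝ)
    (hRy : Ry = Real.sqrt (τ * ∑ k ∈ Icc 1 K, (dualNorm (fun v : Y => ‖v‖) Set.univ ⇑(ry k)) ^ 2))
    (hRp : Rp = Real.sqrt (τ * ∑ k ∈ Icc 1 K, (dualNorm (fun v : Y => ‖v‖) Set.univ ⇑(rp k)) ^ 2)) :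
    ‖ι eu‖ ^ 2
      ≤ dualNorm (fun v : Y => ‖ι v‖) (U : Set Y) ⇑ru * ‖ι eu‖ + (1 / Real.sqrt αLB) * Rp * ‖ι eu‖
        + ((Real.sqrt 2 + 1) / αLB) * Ry * Rp + γc ^ 2 / (2 * αLB ^ 2) * Ry ^ 2 := by
  have hg : ∀ v, ‖C v‖ ≤ |γc| * ‖v‖ := fun v =>
    (hγc v).trans (mul_le_mul_of_nonneg_right (le_abs_self _) (norm_nonneg _))
  have hmem : ∀ k ∈ Icc 1 K, 1 ≤ k ∧ k ≤ K := fun k hk => Finset.mem_Icc.1 hk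
  have sqs : ∀ f : ℕ → ℝ, Real.sqrt (τ * ∑ k ∈ Icc 1 K, f k ^ 2) ^ 2
      = τ * ∑ k ∈ Icc 1 K, f k ^ 2 := fun f =>
    Real.sq_sqrt (mul_nonneg hτ.le (Finset.sum_nonneg fun i _ => sq_nonneg _))
  have cy := aux_cs τ hτ (Icc 1 K) (fun k => dualNorm (fun v : Y => ‖v‖) Set.univ ⇑(ry k))
  have cp := aux_cs τ hτ (Icc 1 K) (fun k => dualNorm (fun v : Y => ‖v‖) Set.univ ⇑(rp k))
  simp only [← hRy] at cy
  simp only [← hRp] at cp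
  have bnd : ∀ (r : ℕ → (Y →ₗ[ℝ] ℝ)) (e : ℕ → Y), τ * ∑ k ∈ Icc 1 K, r k (e k) ≤
      τ * ∑ k ∈ Icc 1 K, dualNorm (fun v : Y => ‖v‖) Set.univ ⇑(r k) * ‖e k‖ := fun r e =>
    mul_le_mul_of_nonneg_left (Finset.sum_le_sum fun k _ => aux_dual' (r k) (e k)) hτ.le
  have sc : ∀ e f : ℕ → Y, -(τ * ∑ k ∈ Icc 1 K, ⟪C (e k), C (f k)⟫) ≤
      τ * ∑ k ∈ Icc 1 K, ‖C (e k)‖ * (|γc| * ‖f k‖) := fun e f => by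
    rw [← mul_neg, ← Finset.sum_neg_distrib]
    refine mul_le_mul_of_nonneg_left (Finset.sum_le_sum fun k _ => ?_) hτ.le
    have h1 := neg_le_of_abs_le (abs_real_inner_le_norm (C (e k)) (C (f k)))
    have h2 := mul_le_mul_of_nonneg_left (hg (f k)) (norm_nonneg (C (e k)))
    linarith
  refine aux_real ‖ι eu‖ αLB γc |γc|
    (Real.sqrt (τ * ∑ k ∈ Icc 1 K, ‖ey k‖ ^ 2)) (Real.sqrt (τ * ∑ k ∈ Icc 1 K, ‖ep k‖ ^ 2))
    (Real.sqrt (τ * ∑ k ∈ Icc 1 K, ‖C (ey k)‖ ^ 2)) Ry Rp _ ⟪ι eu, ι (ep 1)⟫ hαLB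
    (norm_nonneg _) (sq_abs _) (abs_nonneg _) (Real.sqrt_nonneg _) (Real.sqrt_nonneg _)
    (hRy ▸ Real.sqrt_nonneg _) (hRp ▸ Real.sqrt_nonneg _) ?_ ?_ ?_ ?_
  · rw [sqs]
    refine le_trans ?_ (add_le_add_right ((bnd ry ey).trans (cy _)) _)
    have t := aux_tele (fun k => ‖ι (ey (k - 1))‖ ^ 2 / 2) K
    simp only [Nat.add_sub_cancel, Nat.sub_self, hinit] at t
    have key : ∑ k ∈ Icc 1 K, ((‖ι (ey k)‖ ^ 2 / 2 - ‖ι (ey (k - 1))‖ ^ 2 / 2)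
        + τ * (αLB * ‖ey k‖ ^ 2)) ≤ ∑ k ∈ Icc 1 K, τ * ry k (ey k) := by
      refine Finset.sum_le_sum fun k hk => ?_
      rw [← hstate k (hmem k hk).1 (hmem k hk).2 (ey k), real_inner_comm, map_sub]
      have h1 := aux_inner (ι (ey k)) (ι (ey (k - 1)))
      have h2 := mul_le_mul_of_nonneg_left (hcoer (ey k)) hτ.le
      linarith
    rw [Finset.sum_add_distrib, t, ← Finset.mul_sum, ← Finset.mul_sum, ← Finset.mul_sum] at key
    have := sq_nonneg ‖ι (ey K)‖
    linarith
  · rw [sqs]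
    have b1 := (bnd rp ep).trans (cp _)
    have b2 := (sc ey ep).trans (aux_cs τ hτ (Icc 1 K) _ _)
    have b3 : Real.sqrt (τ * ∑ k ∈ Icc 1 K, (|γc| * ‖ep k‖) ^ 2)
        = |γc| * Real.sqrt (τ * ∑ k ∈ Icc 1 K, ‖ep k‖ ^ 2) := by
      simp only [mul_pow]
      rw [← Finset.mul_sum, mul_left_comm, Real.sqrt_mul (sq_nonneg _),
        Real.sqrt_sq (abs_nonneg _)]
    rw [b3] at b2
    have t := aux_tele (fun k => ‖ι (ep k)‖ ^ 2 / 2) K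
    simp only [hfin, map_zero, norm_zero] at t
    have key : ∑ k ∈ Icc 1 K, (τ * (αLB * ‖ep k‖ ^ 2)) ≤ ∑ k ∈ Icc 1 K, (τ * rp k (ep k)
        - τ * ⟪C (ey k), C (ep k)⟫ + (‖ι (ep (k + 1))‖ ^ 2 / 2 - ‖ι (ep k)‖ ^ 2 / 2)) := by
      refine Finset.sum_le_sum fun k hk => ?_
      rw [← hadj k (hmem k hk).1 (hmem k hk).2 (ep k), map_sub]
      have h1 := aux_inner (ι (ep k)) (ι (ep (k + 1)))
      have h2 := mul_le_mul_of_nonneg_left (hcoer (ep k)) hτ.le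
      linarith
    rw [Finset.sum_add_distrib, t, Finset.sum_sub_distrib, ← Finset.mul_sum, ← Finset.mul_sum,
      ← Finset.mul_sum, ← Finset.mul_sum] at key
    have := sq_nonneg ‖ι (ep 1)‖
    linarith
  · rw [sqs]
    have b1 := (bnd rp ey).trans (cp _)
    have b2 := (bnd ry (fun k => - ep k)).trans (cy _)
    simp only [map_neg, norm_neg, Finset.sum_neg_distrib] at b2
    have t := aux_tele (fun k => ⟪ι (ey (k - 1)), ι (ep k)⟫) K
    simp only [Nat.add_sub_cancel, Nat.sub_self, hinit, hfin, map_zero, inner_zero_right] at t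
    have key : ∑ k ∈ Icc 1 K, (⟪ι (ey k), ι (ep (k + 1))⟫ - ⟪ι (ey (k - 1)), ι (ep k)⟫)
        = ∑ k ∈ Icc 1 K, (τ * ry k (ep k) - τ * rp k (ey k) + τ * ‖C (ey k)‖ ^ 2) := by
      refine Finset.sum_congr rfl fun k hk => ?_
      have h1 := hstate k (hmem k hk).1 (hmem k hk).2 (ep k)
      have h2 := hadj k (hmem k hk).1 (hmem k hk).2 (ey k)
      rw [map_sub, inner_sub_left] at h1
      rw [map_sub, inner_sub_right, real_inner_self_eq_norm_sq] at h2
      linarith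
    rw [t, Finset.sum_add_distrib, Finset.sum_sub_distrib, ← Finset.mul_sum, ← Finset.mul_sum,
      ← Finset.mul_sum] at key
    linarith
  · have h1 := hopt eu heu
    rw [real_inner_self_eq_norm_sq] at h1
    have h2 := aux_dual ι hι (U : Set Y) ru eu heu
    linarith
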